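/- arXiv:1801.07398 — 4 statements merged into one kernel-verified Lean document; each statement's English description precedes it below -/
import Mathlib

section
/- Let (G, α) and (H, β) be Hom-groups and f : G → H a morphism of Hom-groups. If the invertibility index of the element f(1_G) ∈ H is n, then β^{n+2}(f(1_G)) = 1_H. -/
universe u v w

/-- A Hom-group `(G, α)`: a set with product, unit, twisting map `α` (here `map`)
and inverse, satisfying Hom-associativity, multiplicativity of `α`, Hom-unitality,
the anti-morphism property of the inverse and Hom-invertibility. -/
structure HomGroup (G : Type u) where
  mul : G → G → G
  one : G
  map : G → G
  inv : G → G
  hom_assoc : ∀ g h k : G, mul (map g) (mul h k) = mul (mul g h) (map k)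
  map_mul : ∀ g h : G, map (mul g h) = mul (map g) (map h)
  mul_one : ∀ g : G, mul g one = map g
  one_mul : ∀ g : G, mul one g = map g
  map_one : map one = one
  inv_anti : ∀ g h : G, inv (mul g h) = mul (inv h) (inv g)
  exists_hom_inv : ∀ g : G, ∃ n : ℕ,
    (map)^[n] (mul g (inv g)) = one ∧ (map)^[n] (mul (inv g) g) = one

/-- The set of exponents witnessing Hom-invertibility of `g`; the invertibility
index of `g` is the least element of this set. -/
def HomGroup.invSet {G : Type u} (hg : HomGroup G) (g : G) : Set ℕ :=
  {n : ℕ | (hg.map)^[n] (hg.mul g (hg.inv g)) = hg.one ∧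
    (hg.map)^[n] (hg.mul (hg.inv g) g) = hg.one}

/-- If `f : G → H` is a morphism of Hom-groups and the invertibility index of
`f(1_G)` in `H` is `n`, then `β^(n+2)(f(1_G)) = 1_H`. -/
theorem homGroup_morphism_image_one {G : Type u} {H : Type v}
    (hg : HomGroup G) (hh : HomGroup H) (f : G → H)
    (hf_map : ∀ g : G, f (hg.map g) = hh.map (f g))
    (hf_mul : ∀ g k : G, f (hg.mul g k) = hh.mul (f g) (f k))
    (n : ℕ) (hidx : IsLeast (hh.invSet (f hg.one)) n) :
    (hh.map)^[n + 2] (f hg.one) = hh.one := by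
  have he : hh.map (f hg.one) = f hg.one := by rw [← hf_map, hg.map_one]
  have hee : hh.mul (f hg.one) (f hg.one) = f hg.one := by
    rw [← hf_mul, hg.mul_one, hg.map_one]
  have hfix : ∀ m : ℕ, (hh.map)^[m] (f hg.one) = f hg.one :=
    fun m => Function.iterate_fixed he m
  have hmul : ∀ (m : ℕ) (a b : H),
      (hh.map)^[m] (hh.mul a b) = hh.mul ((hh.map)^[m] a) ((hh.map)^[m] b) := by
    intro m
    induction m with
    | zero => intro a b; rfl
    | succ k ih =>
      intro a b
      simp only [Function.iterate_succ_apply]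
      rw [hh.map_mul, ih]
  have h1 := hidx.1.1
  rw [hmul, hfix] at h1
  rw [hfix]
  have h2 := hh.hom_assoc (f hg.one) (f hg.one) ((hh.map)^[n] (hh.inv (f hg.one)))
  rw [h1, hh.mul_one, he, he, hee] at h2
  have h3 := hh.map_mul (f hg.one) ((hh.map)^[n] (hh.inv (f hg.one)))
  rw [h1, hh.map_one, he] at h3
  rw [h2, ← h3]
end

section
/- Let (G, α) and (H, β) be Hom-groups and f : G → H a morphism of Hom-groups with f(1_G) = 1_H, and assume β is injective. Then ker f = {g ∈ G : f(g) = 1_H} contains 1_G and is closed under the product of G and under the inverse map of G; in particular (ker f, α) is a Hom-subgroup of G. -/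
universe u v w

/-- If `f : G → H` is a morphism of Hom-groups with `f(1_G) = 1_H` and `β`
injective, then `ker f = {g | f g = 1_H}` contains `1_G` and is closed under the
product and the inverse map of `G`; hence `(ker f, α)` is a Hom-subgroup. -/
theorem homGroup_ker_homSubgroup {G : Type u} {H : Type v}
    (hg : HomGroup G) (hh : HomGroup H) (f : G → H)
    (hf_map : ∀ g : G, f (hg.map g) = hh.map (f g))
    (hf_mul : ∀ g k : G, f (hg.mul g k) = hh.mul (f g) (f k))
    (hf_one : f hg.one = hh.one)
    (hbeta : Function.Injective hh.map) :
    hg.one ∈ {g : G | f g = hh.one} ∧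
    (∀ g k : G, f g = hh.one → f k = hh.one → f (hg.mul g k) = hh.one) ∧
    (∀ g : G, f g = hh.one → f (hg.inv g) = hh.one) := by
  have hit : ∀ (n : ℕ) (x : G), f (hg.map^[n] x) = hh.map^[n] (f x) := by
    intro n
    induction n with
    | zero => intro x; rfl
    | succ n ih => intro x; rw [Function.iterate_succ_apply, Function.iterate_succ_apply, ih, hf_map]
  refine ⟨hf_one, ?_, ?_⟩
  · intro g k h1 h2
    rw [hf_mul, h1, h2, hh.mul_one, hh.map_one]
  · intro g h1
    obtain ⟨n, hn, -⟩ := hg.exists_hom_inv g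
    have h2 := congrArg f hn
    rw [hit, hf_mul, h1, hh.one_mul, hf_one, ← Function.iterate_succ_apply] at h2
    apply hbeta.iterate (n + 1)
    rw [h2, Function.iterate_fixed hh.map_one]
end

section
/- Let (G, α) be a Hom-group and (M, β) a right G-module satisfying β(m·g) = β(m)·α(g) for all g ∈ G, m ∈ M. Set C_n = M × G^n and define face maps d_i : C_n → C_{n−1} by d₀(m, g₁,…,g_n) = (m·g₁, α(g₂),…,α(g_n)); d_i(m, g₁,…,g_n) = (β(m), α(g₁),…,g_i g_{i+1},…,α(g_n)) for 1 ≤ i ≤ n−1; and d_n(m, g₁,…,g_n) = (β(m), α(g₁),…,α(g_{n−1})). Then the simplicial identities d_i ∘ d_j = d_{j−1} ∘ d_i hold for all 0 ≤ i < j ≤ n. -/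
universe u v w

/-- A dual left `G`-module: an abelian group `M` with a map `G × M → M` and an
additive map `β : M → M` with `g·(α(h)·m) = β((gh)·m)` and `1·m = β(m)`. -/
structure IsDualLeftModule {G : Type u} {M : Type v} [AddCommGroup M]
    (hg : HomGroup G) (act : G → M → M) (beta : M → M) : Prop where
  beta_add : ∀ x y : M, beta (x + y) = beta x + beta y
  compat : ∀ (g h : G) (m : M), act g (act (hg.map h) m) = beta (act (hg.mul g h) m)
  one_act : ∀ m : M, act hg.one m = beta m

/-- A dual right `G`-module: `(m·α(h))·g = β(m·(hg))` and `m·1 = β(m)`. -/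
structure IsDualRightModule {G : Type u} {M : Type v} [AddCommGroup M]
    (hg : HomGroup G) (act : M → G → M) (beta : M → M) : Prop where
  beta_add : ∀ x y : M, beta (x + y) = beta x + beta y
  compat : ∀ (g h : G) (m : M), act (act m (hg.map h)) g = beta (act m (hg.mul h g))
  act_one : ∀ m : M, act m hg.one = beta m

/-- A left `G`-module: `(gk)·β(m) = α(g)·(k·m)` and `1·m = β(m)`. -/
structure IsLeftModule {G : Type u} {M : Type v} [AddCommGroup M]
    (hg : HomGroup G) (act : G → M → M) (beta : M → M) : Prop where
  beta_add : ∀ x y : M, beta (x + y) = beta x + beta y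
  compat : ∀ (g k : G) (m : M), act (hg.mul g k) (beta m) = act (hg.map g) (act k m)
  one_act : ∀ m : M, act hg.one m = beta m

/-- A right `G`-module: `β(m)·(gk) = (m·g)·α(k)` and `m·1 = β(m)`. -/
structure IsRightModule {G : Type u} {M : Type v} [AddCommGroup M]
    (hg : HomGroup G) (act : M → G → M) (beta : M → M) : Prop where
  beta_add : ∀ x y : M, beta (x + y) = beta x + beta y
  compat : ∀ (g k : G) (m : M), act (beta m) (hg.mul g k) = act (act m g) (hg.map k)
  act_one : ∀ m : M, act m hg.one = beta m

/-- Face maps of the Hom-group chain complex with right coefficients, on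
`C_{n+1} = M × G^{n+1}`: `d₀(m,g) = (m·g₁, α(g₂),…,α(g_{n+1}))`,
`dᵢ(m,g) = (β(m), α(g₁),…,gᵢg_{i+1},…,α(g_{n+1}))` for `1 ≤ i ≤ n`, and
`d_{n+1}(m,g) = (β(m), α(g₁),…,α(g_n))`. -/
def faceR {G : Type u} {M : Type v} (hg : HomGroup G)
    (act : M → G → M) (beta : M → M) (n i : ℕ)
    (x : M × (Fin (n + 1) → G)) : M × (Fin n → G) :=
  if i = 0 then
    (act x.1 (x.2 0), fun j => hg.map (x.2 j.succ))
  else if i ≤ n then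
    (beta x.1, fun j : Fin n =>
      if (j : ℕ) + 1 < i then hg.map (x.2 j.castSucc)
      else if (j : ℕ) + 1 = i then hg.mul (x.2 j.castSucc) (x.2 j.succ)
      else hg.map (x.2 j.succ))
  else
    (beta x.1, fun j => hg.map (x.2 j.castSucc))

theorem faceR_fst {G : Type u} {M : Type v} (hg : HomGroup G)
    (act : M → G → M) (beta : M → M) (n i : ℕ) (x : M × (Fin (n + 1) → G)) :
    (faceR hg act beta n i x).1 = if i = 0 then act x.1 (x.2 0) else beta x.1 := by
  unfold faceR
  split_ifs <;> rfl

theorem faceR_snd {G : Type u} {M : Type v} (hg : HomGroup G)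
    (act : M → G → M) (beta : M → M) (n i : ℕ) (x : M × (Fin (n + 1) → G)) (j : Fin n) :
    (faceR hg act beta n i x).2 j =
      if (j : ℕ) + 1 < i then hg.map (x.2 j.castSucc)
      else if (j : ℕ) + 1 = i then hg.mul (x.2 j.castSucc) (x.2 j.succ)
      else hg.map (x.2 j.succ) := by
  have hj := j.isLt
  unfold faceR
  split_ifs <;> first | rfl | (exfalso; omega) | simp [*]

/-- For a right `G`-module `(M, β)` with `β(m·g) = β(m)·α(g)`, the face maps of
the Hom-group chain complex `C_n = M × G^n` satisfy the simplicial identities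
`dᵢ ∘ dⱼ = d_{j−1} ∘ dᵢ` for `0 ≤ i < j ≤ n + 2`. -/
theorem homGroup_homology_right_simplicial {G : Type u} {M : Type v}
    [AddCommGroup M] (hg : HomGroup G) (ract : M → G → M) (beta : M → M)
    (hM : IsRightModule hg ract beta)
    (hcond : ∀ (g : G) (m : M), beta (ract m g) = ract (beta m) (hg.map g)) :
    ∀ (n i j : ℕ), i < j → j ≤ n + 2 → ∀ x : M × (Fin (n + 2) → G),
      faceR hg ract beta n i (faceR hg ract beta (n + 1) j x) =
        faceR hg ract beta n (j - 1) (faceR hg ract beta (n + 1) i x) := by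
  intro n i j hij hj x
  refine Prod.ext ?_ (funext fun k => ?_)
  · obtain ⟨j, rfl⟩ : ∃ j', j = j' + 1 := ⟨j - 1, by omega⟩
    simp only [faceR_fst, faceR_snd, Nat.add_sub_cancel]
    rcases Nat.eq_zero_or_pos i with rfl | hi
    · rcases Nat.eq_zero_or_pos j with rfl | hj'
      · simp [hM.compat]
      · have : j ≠ 0 := by omega
        simp [this, hcond, hj']
    · have h1 : i ≠ 0 := by omega
      have h2 : j ≠ 0 := by omega
      simp [h1, h2]
  · obtain ⟨j, rfl⟩ : ∃ j', j = j' + 1 := ⟨j - 1, by omega⟩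
    have e : k.succ.castSucc = k.castSucc.succ := rfl
    simp only [faceR_snd, Nat.add_sub_cancel, Fin.val_castSucc, Fin.val_succ, e]
    split_ifs <;> first
      | (exfalso; omega)
      | rfl
      | simp only [hg.map_mul]
      | simp only [hg.hom_assoc]
end

section
/- Let (G, α) be a Hom-group satisfying α(g⁻¹) = α(g)⁻¹ for all g ∈ G, and let (M, β) be a right G-module satisfying β(m·g) = β(m)·α(g). Let M̃ = M be the left G-module with g·m := m·g⁻¹. Define F : G^n × M̃ → M × G^n by F(g₁,…,g_n, m) = (m, g_n⁻¹,…,g₁⁻¹). Then d₀^{M} ∘ F = F ∘ d₀^{M̃}, d_n^{M} ∘ F = F ∘ d_n^{M̃}, and d_i^{M} ∘ F = F ∘ d_{n−i}^{M̃} for 1 ≤ i ≤ n−1, where d^{M̃} denotes the face maps of Hom-group homology with left coefficients M̃ and d^{M} those with right coefficients M. Moreover F is a bijection whenever g ↦ g⁻¹ is a bijection of G. -/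
universe u v w

/-- Face maps of the Hom-group chain complex with left coefficients, on
`C_{n+1} = G^{n+1} × M`: `d₀(g,m) = (α(g₁),…,α(g_n), g_{n+1}·m)`,
`dᵢ(g,m) = (α(g₁),…,gᵢg_{i+1},…,α(g_{n+1}), β(m))` for `1 ≤ i ≤ n`, and
`d_{n+1}(g,m) = (α(g₂),…,α(g_{n+1}), β(m))`. -/
def faceL {G : Type u} {M : Type v} (hg : HomGroup G)
    (act : G → M → M) (beta : M → M) (n i : ℕ)
    (x : (Fin (n + 1) → G) × M) : (Fin n → G) × M :=
  if i = 0 then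
    (fun j => hg.map (x.1 j.castSucc), act (x.1 (Fin.last n)) x.2)
  else if i ≤ n then
    ((fun j : Fin n =>
      if (j : ℕ) + 1 < i then hg.map (x.1 j.castSucc)
      else if (j : ℕ) + 1 = i then hg.mul (x.1 j.castSucc) (x.1 j.succ)
      else hg.map (x.1 j.succ)), beta x.2)
  else
    (fun j => hg.map (x.1 j.succ), beta x.2)

/-- The comparison map `F(g₁,…,g_n, m) = (m, g_n⁻¹,…,g₁⁻¹)` between chains with
left coefficients `M̃` and right coefficients `M`. -/
def Fpair {G : Type u} {M : Type v} (hg : HomGroup G) (n : ℕ)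
    (x : (Fin n → G) × M) : M × (Fin n → G) :=
  (x.2, fun j => hg.inv (x.1 j.rev))

/-- Let `(M, β)` be a right `G`-module with `β(m·g) = β(m)·α(g)`, on a Hom-group
with `α(g⁻¹) = α(g)⁻¹`, and let `M̃` be the left `G`-module `g·m := m·g⁻¹`.
Then `d₀^{M} ∘ F = F ∘ d₀^{M̃}`, `d_{n+1}^{M} ∘ F = F ∘ d_{n+1}^{M̃}`, and
`dᵢ^{M} ∘ F = F ∘ d_{n+1−i}^{M̃}` for `1 ≤ i ≤ n`; moreover `F` is a bijection
whenever `g ↦ g⁻¹` is a bijection of `G`. -/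
theorem homGroup_homology_left_right_compare {G : Type u} {M : Type v}
    [AddCommGroup M] (hg : HomGroup G)
    (hinv : ∀ g : G, hg.map (hg.inv g) = hg.inv (hg.map g))
    (ract : M → G → M) (beta : M → M) (hM : IsRightModule hg ract beta)
    (hcond : ∀ (g : G) (m : M), beta (ract m g) = ract (beta m) (hg.map g)) :
    (∀ (n : ℕ) (x : (Fin (n + 1) → G) × M),
      faceR hg ract beta n 0 (Fpair hg (n + 1) x) =
        Fpair hg n (faceL hg (fun g m => ract m (hg.inv g)) beta n 0 x)) ∧
    (∀ (n : ℕ) (x : (Fin (n + 1) → G) × M),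
      faceR hg ract beta n (n + 1) (Fpair hg (n + 1) x) =
        Fpair hg n (faceL hg (fun g m => ract m (hg.inv g)) beta n (n + 1) x)) ∧
    (∀ (n i : ℕ), 1 ≤ i → i ≤ n → ∀ x : (Fin (n + 1) → G) × M,
      faceR hg ract beta n i (Fpair hg (n + 1) x) =
        Fpair hg n (faceL hg (fun g m => ract m (hg.inv g)) beta n (n + 1 - i) x)) ∧
    (Function.Bijective hg.inv →
      ∀ n : ℕ, Function.Bijective (Fpair hg (M := M) n)) := by
  refine ⟨?_, ?_, ?_, ?_⟩
  · intro n x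
    simp [faceR, faceL, Fpair, hinv, Fin.rev_succ]
  · intro n x
    simp [faceR, faceL, Fpair, hinv, Fin.rev_castSucc]
  · intro n i h1 h2 x
    have a1 : i ≠ 0 := by omega
    have a2 : n + 1 - i ≠ 0 := by omega
    have a3 : n + 1 - i ≤ n := by omega
    simp only [faceR, faceL, Fpair, if_neg a1, if_neg a2, if_pos a3, if_pos h2]
    refine Prod.ext rfl ?_
    funext j
    have hj := j.isLt
    simp only [Fin.rev_castSucc, Fin.rev_succ, Fin.val_rev]
    rcases lt_trichotomy ((j : ℕ) + 1) i with h | h | h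
    · rw [if_pos h, if_neg (by omega), if_neg (by omega), hinv]
    · rw [if_neg (by omega), if_pos h, if_neg (by omega), if_pos (by omega), hg.inv_anti]
    · rw [if_neg (by omega), if_neg (by omega), if_pos (by omega), hinv]
  · intro hb n
    constructor
    · rintro ⟨f, m⟩ ⟨f2, m2⟩ h
      simp only [Fpair, Prod.mk.injEq] at h
      refine Prod.ext ?_ h.1
      funext j
      have := congrFun h.2 j.rev
      simp only [Fin.rev_rev] at this
      exact hb.1 this
    · rintro ⟨m, f⟩
      choose s hs using hb.2
      refine ⟨(fun j => s (f j.rev), m), ?_⟩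
      simp [Fpair, hs]
end
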